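/- Let b_1, …, b_l be a δ-LLL-reduced basis of a lattice in ℝ^m, let R = ‖b_1‖, and let v = Σ_{i=1}^{l} c_i b_i with integer coefficients c_i satisfy ‖v‖ < R. Then the second-to-last coefficient satisfies |c_{l−1}| ≤ (δ − 1/4)^{2−l} + (1/2)·(δ − 1/4)^{1−l}. -/

import Mathlib

open Finset
open scoped RealInnerProductSpace

/- Pairing `v = ∑ c_i b_i` with `b̃_j` kills every `b_i` with `i < j`, so by Cauchy–Schwarz the
coordinate `c_j + ∑_{i > j} c_i μ_{j,i}` of `v` along `b̃_j` is at most `‖v‖ / ‖b̃_j‖` in absolute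
value. For a reduced basis the norms `‖b̃_j‖` decay at worst geometrically with ratio `√(δ - 1/4)`.
At the last index the coordinate is the coefficient itself; at the second-to-last index it is off by
the single term `c_l μ_{l-1,l}`, which size reduction makes at most half of the last coefficient. -/

lemma sqrt_zpow_le_zpow_of_nonpos {x : ℝ} (hx₀ : 0 < x) (hx₁ : x ≤ 1) {n : ℤ} (hn : n ≤ 0) :
    √x ^ n ≤ x ^ n := by
  obtain ⟨k, rfl⟩ := Int.exists_eq_neg_ofNat hn
  rw [zpow_neg, zpow_neg, zpow_natCast, zpow_natCast]
  gcongr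
  exact Real.le_sqrt_self_iff.2 hx₁

section GramSchmidt

open InnerProductSpace (gramSchmidt gramSchmidt_def'' gramSchmidt_orthogonal
  gramSchmidt_inv_triangular)

variable {ι E : Type*} [LinearOrder ι] [LocallyFiniteOrderBot ι] [WellFoundedLT ι]
  [NormedAddCommGroup E] [InnerProductSpace ℝ E]

/-- The Gram–Schmidt coefficient `μ_{j,i}` of `b i` along the `j`-th orthogonalized vector, with the
paper's order of indices. It is `0` when that vector vanishes. -/
noncomputable def gramSchmidtCoeff (b : ι → E) (j i : ι) : ℝ :=
  ⟪b i, gramSchmidt ℝ b j⟫ / ⟪gramSchmidt ℝ b j, gramSchmidt ℝ b j⟫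

lemma gramSchmidt_eq_sub_sum_gramSchmidtCoeff (b : ι → E) (i : ι) :
    gramSchmidt ℝ b i = b i - ∑ j ∈ Iio i, gramSchmidtCoeff b j i • gramSchmidt ℝ b j := by
  rw [eq_sub_iff_add_eq]
  conv_rhs => rw [gramSchmidt_def'' ℝ b i]
  simp only [gramSchmidtCoeff, real_inner_self_eq_norm_sq, real_inner_comm,
    RCLike.ofReal_real_eq_id, id_eq]

lemma eq_gramSchmidt_of_forall_eq_sub_sum {b bt : ι → E}
    (h : ∀ i, bt i = b i - ∑ j ∈ Iio i, (⟪b i, bt j⟫ / ⟪bt j, bt j⟫) • bt j) :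
    bt = gramSchmidt ℝ b := by
  ext i
  induction i using WellFoundedLT.induction with
  | ind i ih =>
    rw [h i, gramSchmidt_eq_sub_sum_gramSchmidtCoeff]
    refine congrArg (b i - ·) (sum_congr rfl fun j hj ↦ ?_)
    rw [ih j (mem_Iio.1 hj), gramSchmidtCoeff]

lemma inner_gramSchmidt_eq_gramSchmidtCoeff_mul (b : ι → E) (i j : ι) :
    ⟪b i, gramSchmidt ℝ b j⟫ = gramSchmidtCoeff b j i * ‖gramSchmidt ℝ b j‖ ^ 2 := by
  rw [gramSchmidtCoeff, real_inner_self_eq_norm_sq]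
  by_cases hj : gramSchmidt ℝ b j = 0
  · simp [hj]
  · field_simp

lemma inner_gramSchmidt_self (b : ι → E) (j : ι) :
    ⟪b j, gramSchmidt ℝ b j⟫ = ‖gramSchmidt ℝ b j‖ ^ 2 := by
  have h_tail : ∑ i ∈ Iio j, ⟪gramSchmidtCoeff b i j • gramSchmidt ℝ b i, gramSchmidt ℝ b j⟫ = 0 :=
    sum_eq_zero fun i hi ↦ by
      rw [real_inner_smul_left, gramSchmidt_orthogonal ℝ b (mem_Iio.1 hi).ne, mul_zero]
  rw [← real_inner_self_eq_norm_sq, eq_comm]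
  nth_rw 1 [gramSchmidt_eq_sub_sum_gramSchmidtCoeff b j]
  rw [inner_sub_left, sum_inner, h_tail, sub_zero]

variable [Fintype ι] [LocallyFiniteOrderTop ι]

lemma inner_sum_smul_gramSchmidt (b : ι → E) (c : ι → ℝ) (j : ι) :
    ⟪∑ i, c i • b i, gramSchmidt ℝ b j⟫ =
      (c j + ∑ i ∈ Ioi j, c i * gramSchmidtCoeff b j i) * ‖gramSchmidt ℝ b j‖ ^ 2 := by
  have h_below : ∀ i ∉ Ici j, c i * ⟪b i, gramSchmidt ℝ b j⟫ = 0 := fun i hi ↦ by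
    rw [mem_Ici, not_le] at hi
    rw [real_inner_comm, gramSchmidt_inv_triangular ℝ b hi, mul_zero]
  calc ⟪∑ i, c i • b i, gramSchmidt ℝ b j⟫
      = ∑ i, c i * ⟪b i, gramSchmidt ℝ b j⟫ := by simp only [sum_inner, real_inner_smul_left]
    _ = ∑ i ∈ Ici j, c i * ⟪b i, gramSchmidt ℝ b j⟫ :=
      (sum_subset (subset_univ _) fun i _ hi ↦ h_below i hi).symm
    _ = c j * ⟪b j, gramSchmidt ℝ b j⟫ + ∑ i ∈ Ioi j, c i * ⟪b i, gramSchmidt ℝ b j⟫ := by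
      rw [Ici_eq_cons_Ioi, sum_cons]
    _ = (c j + ∑ i ∈ Ioi j, c i * gramSchmidtCoeff b j i) * ‖gramSchmidt ℝ b j‖ ^ 2 := by
      rw [inner_gramSchmidt_self, add_mul, sum_mul]
      simp only [inner_gramSchmidt_eq_gramSchmidtCoeff_mul, mul_assoc]

lemma abs_add_sum_mul_gramSchmidtCoeff_mul_norm_le (b : ι → E) (c : ι → ℝ) (j : ι) :
    |c j + ∑ i ∈ Ioi j, c i * gramSchmidtCoeff b j i| * ‖gramSchmidt ℝ b j‖ ≤
      ‖∑ i, c i • b i‖ := by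
  obtain hj | hj := (norm_nonneg (gramSchmidt ℝ b j)).eq_or_lt
  · simp [← hj]
  · refine le_of_mul_le_mul_right ?_ hj
    calc |c j + ∑ i ∈ Ioi j, c i * gramSchmidtCoeff b j i| * ‖gramSchmidt ℝ b j‖ *
          ‖gramSchmidt ℝ b j‖
        = |⟪∑ i, c i • b i, gramSchmidt ℝ b j⟫| := by
          rw [inner_sum_smul_gramSchmidt, abs_mul, abs_of_nonneg (sq_nonneg ‖_‖), sq, mul_assoc]
      _ ≤ ‖∑ i, c i • b i‖ * ‖gramSchmidt ℝ b j‖ := abs_real_inner_le_norm _ _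

end GramSchmidt

section LLL

open InnerProductSpace (gramSchmidt)

variable {E : Type*} [NormedAddCommGroup E] [InnerProductSpace ℝ E] {l : ℕ} {δ : ℝ}

/-- `b` satisfies the two conditions (size reduction and Lovász) of a `δ`-LLL-reduced basis. Linear
independence of `b` is not part of the predicate. -/
structure IsLLLReduced (δ : ℝ) (b : Fin l → E) : Prop where
  abs_gramSchmidtCoeff_le : ∀ i j, j < i → |gramSchmidtCoeff b j i| ≤ 1 / 2
  lovasz : ∀ (i : Fin l) (h : (i : ℕ) + 1 < l),
    (δ - gramSchmidtCoeff b i ⟨i + 1, h⟩ ^ 2) * ‖gramSchmidt ℝ b i‖ ^ 2 ≤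
      ‖gramSchmidt ℝ b ⟨i + 1, h⟩‖ ^ 2

namespace IsLLLReduced

lemma of_forall_eq_sub_sum {b bt : Fin l → E} {μ : Fin l → Fin l → ℝ}
    (hμ : ∀ i j, j < i → μ j i = ⟪b i, bt j⟫ / ⟪bt j, bt j⟫)
    (hbt : ∀ i, bt i = b i - ∑ j ∈ Iio i, μ j i • bt j)
    (hsize : ∀ i j, j < i → |μ j i| ≤ 1 / 2)
    (hLovasz : ∀ (i : Fin l) (h : (i : ℕ) + 1 < l),
      (δ - μ i ⟨i + 1, h⟩ ^ 2) * ‖bt i‖ ^ 2 ≤ ‖bt ⟨i + 1, h⟩‖ ^ 2) :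
    IsLLLReduced δ b := by
  obtain rfl : bt = gramSchmidt ℝ b := eq_gramSchmidt_of_forall_eq_sub_sum fun i ↦ by
    rw [hbt i]
    exact congrArg (b i - ·) (sum_congr rfl fun j hj ↦ by rw [hμ i j (mem_Iio.1 hj)])
  have h_coeff : ∀ i j, j < i → μ j i = gramSchmidtCoeff b j i := hμ
  refine ⟨fun i j hij ↦ h_coeff i j hij ▸ hsize i j hij, fun i h ↦ ?_⟩
  rw [← h_coeff _ _ (Fin.lt_def.2 (Nat.lt_succ_self i))]
  exact hLovasz i h

variable {b : Fin l → E}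

lemma sqrt_mul_norm_gramSchmidt_le_norm_gramSchmidt_succ (hb : IsLLLReduced δ b) (i : Fin l)
    (h : (i : ℕ) + 1 < l) :
    √(δ - 1 / 4) * ‖gramSchmidt ℝ b i‖ ≤ ‖gramSchmidt ℝ b ⟨i + 1, h⟩‖ := by
  have h_sq : gramSchmidtCoeff b i ⟨i + 1, h⟩ ^ 2 ≤ 1 / 4 := by
    have h_abs := hb.abs_gramSchmidtCoeff_le ⟨i + 1, h⟩ i (Nat.lt_succ_self _)
    rw [← sq_abs]
    exact (pow_le_pow_left₀ (abs_nonneg _) h_abs 2).trans_eq (by norm_num)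
  rw [← Real.sqrt_sq (norm_nonneg (gramSchmidt ℝ b i)), ← Real.sqrt_mul' _ (sq_nonneg _)]
  refine Real.sqrt_le_iff.2 ⟨norm_nonneg _, le_trans ?_ (hb.lovasz i h)⟩
  gcongr

lemma sqrt_pow_mul_norm_zero_le_norm_gramSchmidt (hb : IsLLLReduced δ b) :
    ∀ (k : ℕ) (hk : k < l), √(δ - 1 / 4) ^ k * ‖b ⟨0, k.zero_le.trans_lt hk⟩‖ ≤
      ‖gramSchmidt ℝ b ⟨k, hk⟩‖
  | 0, hk => by
    have h_empty : Iio (⟨0, hk⟩ : Fin l) = ∅ := by ext i; simp [Fin.lt_def]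
    rw [gramSchmidt_eq_sub_sum_gramSchmidtCoeff, h_empty, sum_empty, sub_zero, pow_zero, one_mul]
  | k + 1, hk => by
    have hk' : k < l := k.lt_succ_self.trans hk
    calc √(δ - 1 / 4) ^ (k + 1) * ‖b ⟨0, k.zero_le.trans_lt hk'⟩‖
        = √(δ - 1 / 4) * (√(δ - 1 / 4) ^ k * ‖b ⟨0, k.zero_le.trans_lt hk'⟩‖) := by ring
      _ ≤ √(δ - 1 / 4) * ‖gramSchmidt ℝ b ⟨k, hk'⟩‖ := by
        gcongr
        exact hb.sqrt_pow_mul_norm_zero_le_norm_gramSchmidt k hk'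
      _ ≤ ‖gramSchmidt ℝ b ⟨k + 1, hk⟩‖ :=
        hb.sqrt_mul_norm_gramSchmidt_le_norm_gramSchmidt_succ ⟨k, hk'⟩ hk

lemma abs_add_sum_mul_gramSchmidtCoeff_le (hb : IsLLLReduced δ b) (hδ : 1 / 4 < δ) (c : Fin l → ℝ)
    (j : Fin l) (hb₀ : b ⟨0, j.pos⟩ ≠ 0) (hc : ‖∑ i, c i • b i‖ ≤ ‖b ⟨0, j.pos⟩‖) :
    |c j + ∑ i ∈ Ioi j, c i * gramSchmidtCoeff b j i| ≤ √(δ - 1 / 4) ^ (-(j : ℤ)) := by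
  have h_sqrt : 0 < √(δ - 1 / 4) := Real.sqrt_pos.2 (sub_pos.2 hδ)
  rw [zpow_neg, zpow_natCast, ← one_div, le_div_iff₀ (pow_pos h_sqrt _)]
  refine le_of_mul_le_mul_right ?_ (norm_pos_iff.2 hb₀)
  calc |c j + ∑ i ∈ Ioi j, c i * gramSchmidtCoeff b j i| * √(δ - 1 / 4) ^ (j : ℕ) *
        ‖b ⟨0, j.pos⟩‖
      ≤ |c j + ∑ i ∈ Ioi j, c i * gramSchmidtCoeff b j i| * ‖gramSchmidt ℝ b j‖ := by
        rw [mul_assoc]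
        gcongr
        exact hb.sqrt_pow_mul_norm_zero_le_norm_gramSchmidt j j.isLt
    _ ≤ ‖∑ i, c i • b i‖ := abs_add_sum_mul_gramSchmidtCoeff_mul_norm_le b c j
    _ ≤ 1 * ‖b ⟨0, j.pos⟩‖ := hc.trans_eq (one_mul _).symm

end IsLLLReduced

theorem lll_second_to_last_coefficient_bound_general (hl : 2 ≤ l) (hδ : 1 / 4 < δ) {b : Fin l → E}
    (hb : IsLLLReduced δ b) (hb₀ : b ⟨0, by omega⟩ ≠ 0) (c : Fin l → ℝ)
    (hc : ‖∑ i, c i • b i‖ ≤ ‖b ⟨0, by omega⟩‖) :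
    |c ⟨l - 2, by omega⟩| ≤
      √(δ - 1 / 4) ^ ((2 : ℤ) - l) + 1 / 2 * √(δ - 1 / 4) ^ ((1 : ℤ) - l) := by
  let p : Fin l := ⟨l - 2, by omega⟩
  let q : Fin l := ⟨l - 1, by omega⟩
  have hpq : p < q := Fin.lt_def.2 (by simp only [p, q]; omega)
  have h_last : |c q| ≤ √(δ - 1 / 4) ^ ((1 : ℤ) - l) := by
    have h_Ioi : Ioi q = ∅ := by
      ext i
      simp only [q, mem_Ioi, Fin.lt_def, notMem_empty, iff_false]
      omega
    have h_coord := hb.abs_add_sum_mul_gramSchmidtCoeff_le hδ c q hb₀ hc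
    rwa [h_Ioi, sum_empty, add_zero, show -((q : ℕ) : ℤ) = 1 - l by simp only [q]; omega] at h_coord
  have h_prev : |c p + c q * gramSchmidtCoeff b p q| ≤ √(δ - 1 / 4) ^ ((2 : ℤ) - l) := by
    have h_Ioi : Ioi p = {q} := by
      ext i
      simp only [p, q, mem_Ioi, Fin.lt_def, mem_singleton, Fin.ext_iff]
      omega
    have h_coord := hb.abs_add_sum_mul_gramSchmidtCoeff_le hδ c p hb₀ hc
    rwa [h_Ioi, sum_singleton, show -((p : ℕ) : ℤ) = 2 - l by simp only [p]; omega] at h_coord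
  calc |c p| = |(c p + c q * gramSchmidtCoeff b p q) - c q * gramSchmidtCoeff b p q| := by
        rw [add_sub_cancel_right]
    _ ≤ |c p + c q * gramSchmidtCoeff b p q| + |gramSchmidtCoeff b p q| * |c q| := by
        rw [← abs_mul, mul_comm (gramSchmidtCoeff b p q)]
        exact abs_sub _ _
    _ ≤ √(δ - 1 / 4) ^ ((2 : ℤ) - l) + 1 / 2 * √(δ - 1 / 4) ^ ((1 : ℤ) - l) := by
        gcongr
        exact hb.abs_gramSchmidtCoeff_le q p hpq

end LLL

/-- For a δ-LLL-reduced basis `b_1, …, b_l` (`l ≥ 2`), `R = ‖b_1‖`, and a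
lattice vector `v = Σ c_i b_i` with integer coefficients and `‖v‖ < R`, the
second-to-last coefficient satisfies
`|c_{l−1}| ≤ (δ − 1/4)^(2−l) + (1/2)·(δ − 1/4)^(1−l)`. -/
theorem lll_second_to_last_coefficient_bound
    (m l : ℕ) (hl : 2 ≤ l) (hlm : l ≤ m) (δ : ℝ) (hδ : 1/4 < δ ∧ δ < 1)
    (b bt : Fin l → EuclideanSpace ℝ (Fin m))
    (μ : Fin l → Fin l → ℝ)
    (hind : LinearIndependent ℝ b)
    (hμ : ∀ i j : Fin l, j < i → μ j i = ⟪b i, bt j⟫ / ⟪bt j, bt j⟫)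
    (hbt : ∀ i : Fin l, bt i = b i - ∑ j ∈ Finset.Iio i, μ j i • bt j)
    (hsize : ∀ i j : Fin l, j < i → |μ j i| ≤ 1/2)
    (hLovasz : ∀ (i : Fin l) (h : (i : ℕ) + 1 < l),
      ‖bt ⟨(i : ℕ) + 1, h⟩‖ ^ 2 ≥ (δ - (μ i ⟨(i : ℕ) + 1, h⟩) ^ 2) * ‖bt i‖ ^ 2)
    (R : ℝ) (hR : R = ‖b ⟨0, by omega⟩‖)
    (c : Fin l → ℤ) (v : EuclideanSpace ℝ (Fin m))
    (hv : v = ∑ i, (c i : ℝ) • b i)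
    (hvR : ‖v‖ < R) :
    |(c ⟨l - 2, by omega⟩ : ℝ)| ≤
      (δ - 1/4) ^ ((2 : ℤ) - (l : ℤ)) + (1/2) * (δ - 1/4) ^ ((1 : ℤ) - (l : ℤ)) := by
  obtain ⟨hδ₀, hδ₁⟩ := hδ
  have hb : IsLLLReduced δ b := .of_forall_eq_sub_sum hμ hbt hsize hLovasz
  have hb₀ : b ⟨0, by omega⟩ ≠ 0 := norm_pos_iff.1 (hR ▸ (norm_nonneg v).trans_lt hvR)
  refine (lll_second_to_last_coefficient_bound_general hl hδ₀ hb hb₀ (fun i ↦ c i)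
    (hv ▸ hR ▸ hvR.le)).trans ?_
  gcongr ?_ + 1 / 2 * ?_ <;>
    exact sqrt_zpow_le_zpow_of_nonpos (by linarith) (by linarith) (by omega)
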